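/- Assume 3 ∤ σ and 3 ∤ N_{Z/ℚ}(η). Then for every k ≥ 2, every k×k matrix C with entries in the maximal order 𝔪 = I(λ) is a sum of cubes of k×k matrices with entries in 𝔪. -/

import Mathlib

/-!
Matrices over the maximal order `I(λ)` in a cyclic division algebra of degree `n = 3`
over `ℚ` are sums of squares, provided `σ ≡ 1 (mod 2)`.
-/

set_option synthInstance.maxHeartbeats 1000000

noncomputable section

/-- `ζ = e^{2πi/p}`, a primitive `p`-th root of unity in `ℂ`. -/
def zetaC (p : ℕ) : ℂ := Complex.exp (2 * Real.pi * Complex.I / p)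

/-- The Gaussian period `η_s = ∑_{r=0}^{h-1} ζ^{g^{nr+s}}`. -/
def gaussPeriod (n p h g : ℕ) (s : ℕ) : ℂ :=
  ∑ r ∈ Finset.range h, zetaC p ^ (g ^ (n * r + s))

/-- `Z = ℚ(η)`, the subfield of `ℂ` generated over `ℚ` by the Gaussian period `η = η₀`. -/
def Zf (n p h g : ℕ) : IntermediateField ℚ ℂ :=
  IntermediateField.adjoin ℚ {gaussPeriod n p h g 0}

/-- `η` as an element of `Z = ℚ(η)`. -/
def etaZ (n p h g : ℕ) : Zf n p h g :=
  ⟨gaussPeriod n p h g 0, IntermediateField.subset_adjoin ℚ _ rfl⟩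

/-- `D(z) = diag(z, S(z), …, S^{n-1}(z))` in `M_n(Z)`. -/
def Dm (n p h g : ℕ) (S : Zf n p h g ≃ₐ[ℚ] Zf n p h g) (z : Zf n p h g) :
    Matrix (Fin n) (Fin n) (Zf n p h g) :=
  Matrix.diagonal fun i => (S ^ (i : ℕ)) z

/-- The matrix `U` with `U_{i+1,i} = 1`, `U_{1,n} = σ`, and `0` elsewhere
(indices written `0`-based). -/
def Um (n p h g : ℕ) (σ : ℕ) : Matrix (Fin n) (Fin n) (Zf n p h g) :=
  Matrix.of fun i j =>
    if (i : ℕ) = (j : ℕ) + 1 then 1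
    else if (i : ℕ) = 0 ∧ (j : ℕ) = n - 1 then (σ : Zf n p h g) else 0

/-- `Y = (1/p)·(λ·I − U)·D(α)` with `α = β^{n-1}`. -/
def Ym (n p h g σ : ℕ) (lam : ℤ) (S : Zf n p h g ≃ₐ[ℚ] Zf n p h g) (β : Zf n p h g) :
    Matrix (Fin n) (Fin n) (Zf n p h g) :=
  ((p : Zf n p h g)⁻¹) •
    (((lam : Zf n p h g) • (1 : Matrix (Fin n) (Fin n) (Zf n p h g)) - Um n p h g σ) *
      Dm n p h g S (β ^ (n - 1)))

/-- The maximal order `I(λ)`: all `ℤ`-linear combinations of the `n²` matrices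
`Y^i · D(η_s)`, `0 ≤ i, s ≤ n-1`. -/
def Iorder (n p h g σ : ℕ) (lam : ℤ) (S : Zf n p h g ≃ₐ[ℚ] Zf n p h g) (β : Zf n p h g) :
    Set (Matrix (Fin n) (Fin n) (Zf n p h g)) :=
  { M | ∃ c : Fin n → Fin n → ℤ,
      M = ∑ i : Fin n, ∑ s : Fin n,
        c i s • (Ym n p h g σ lam S β ^ (i : ℕ) *
          Dm n p h g S ((S ^ (s : ℕ)) (etaZ n p h g))) }


section PartA
open Matrix

/-- group generated by cubes of matrices over `R` -/
def cubeG {M : Type*} [Ring M] (k : ℕ) (R : AddSubgroup M) :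
    AddSubgroup (Matrix (Fin k) (Fin k) M) :=
  AddSubgroup.closure {X | ∃ A : Matrix (Fin k) (Fin k) M, (∀ i j, A i j ∈ R) ∧ X = A ^ 3}

variable {M : Type*} [Ring M] {k : ℕ} {R : AddSubgroup M}

lemma single_entries {i j : Fin k} {x : M} (hx : x ∈ R) (a b : Fin k) :
    (single i j x) a b ∈ R := by
  rw [single_apply]; split_ifs
  · exact hx
  · exact R.zero_mem

lemma cube_mem {A : Matrix (Fin k) (Fin k) M} (hA : ∀ i j, A i j ∈ R) : A ^ 3 ∈ cubeG k R :=
  AddSubgroup.subset_closure ⟨A, hA, rfl⟩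

lemma idem_mem {A : Matrix (Fin k) (Fin k) M} (hA : ∀ i j, A i j ∈ R) (h : A * A = A) :
    A ∈ cubeG k R := by
  have h1 := cube_mem hA
  rwa [pow_succ, pow_two, h, h] at h1

lemma diag_one_mem (h1 : (1 : M) ∈ R) (i : Fin k) : single i i (1 : M) ∈ cubeG k R :=
  idem_mem (single_entries h1) (by simp)

lemma off_mem (h1 : (1 : M) ∈ R) {i j : Fin k} (hij : i ≠ j) {x : M} (hx : x ∈ R) :
    single i j x ∈ cubeG k R := by
  have h2 : single i i (1 : M) + single i j x ∈ cubeG k R := by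
    refine idem_mem (fun a b => R.add_mem (single_entries h1 a b) (single_entries hx a b)) ?_
    simp [mul_add, add_mul, hij.symm]
  simpa using (cubeG k R).sub_mem h2 (diag_one_mem h1 i)

lemma comm_mem0 (h1 : (1 : M) ∈ R) {i j : Fin k} (hij : i ≠ j) {x y : M} (hx : x ∈ R)
    (hy : y ∈ R) (hxy : x * y ∈ R) (hyx : y * x ∈ R) (hyxy : y * x * y ∈ R) :
    single i i (x * y) - single j j (y * x) ∈ cubeG k R := by
  have hP : single i i (1 : M) + single i j x + single j i y + single j j (y * x)
      - single i i (x * y) - single j i (y * x * y) ∈ cubeG k R := by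
    refine idem_mem (fun a b => ?_) ?_
    · exact R.sub_mem (R.sub_mem (R.add_mem (R.add_mem (R.add_mem (single_entries h1 a b)
        (single_entries hx a b)) (single_entries hy a b)) (single_entries hyx a b))
        (single_entries hxy a b)) (single_entries hyxy a b)
    · simp only [mul_add, add_mul, mul_sub, sub_mul, single_mul_single_same, ne_eq, hij, hij.symm,
        not_false_eq_true, single_mul_single_of_ne, mul_one, one_mul, mul_assoc]
      abel
  have e := (cubeG k R).sub_mem (diag_one_mem h1 i) hP
  have e2 := (cubeG k R).add_mem e (off_mem h1 hij hx)
  have e3 := (cubeG k R).add_mem e2 (off_mem h1 hij.symm hy)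
  have e4 := (cubeG k R).sub_mem e3 (off_mem h1 hij.symm hyxy)
  convert e4 using 1
  abel

lemma diag_sub_mem (h1 : (1 : M) ∈ R) {i j : Fin k} (hij : i ≠ j) {x : M} (hx : x ∈ R) :
    single i i x - single j j x ∈ cubeG k R := by
  have := comm_mem0 (x := x) (y := 1) h1 hij hx h1 (by simpa) (by simpa) (by simpa)
  simpa using this

lemma three_mem0 (h1 : (1 : M) ∈ R) {i j : Fin k} (hij : i ≠ j) {x : M} (hx : x ∈ R) :
    single i i ((3 : ℕ) • x) ∈ cubeG k R := by
  have a1 : (single i i (1 : M) + single j i 1 + single i j x) ^ 3 ∈ cubeG k R :=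
    cube_mem (fun a b => R.add_mem (R.add_mem (single_entries h1 a b) (single_entries h1 a b))
      (single_entries hx a b))
  have a2 : (single j i 1 + single i j x) ^ 3 ∈ cubeG k R :=
    cube_mem (fun a b => R.add_mem (single_entries h1 a b) (single_entries hx a b))
  have e := (cubeG k R).sub_mem a1 a2
  have e1 := (cubeG k R).sub_mem e (diag_one_mem h1 i)
  have e2 := (cubeG k R).sub_mem e1 (off_mem h1 hij hx)
  have e3 := (cubeG k R).sub_mem e2 (off_mem h1 hij.symm h1)
  have e4 := (cubeG k R).add_mem e3 (diag_sub_mem h1 hij hx)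
  convert e4 using 1
  rw [succ_nsmul, two_nsmul]
  simp only [pow_succ, pow_zero, one_mul, mul_add, add_mul, single_mul_single_same, ne_eq, hij,
    hij.symm, not_false_eq_true, single_mul_single_of_ne, mul_one, single_add, zero_mul]
  abel

lemma all_mem (h1 : (1 : M) ∈ R) (i : Fin k) (h : ∀ x ∈ R, single i i x ∈ cubeG k R)
    (C : Matrix (Fin k) (Fin k) M) (hC : ∀ i j, C i j ∈ R) : C ∈ cubeG k R := by
  rw [matrix_eq_sum_single C]
  refine sum_mem fun a _ => sum_mem fun b _ => ?_
  by_cases hab : a = b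
  · subst hab
    by_cases hai : a = i
    · subst hai; exact h _ (hC _ _)
    · simpa using (cubeG k R).add_mem (diag_sub_mem h1 hai (hC a a)) (h _ (hC a a))
  · exact off_mem h1 hab (hC _ _)

lemma cubeG_exists {C : Matrix (Fin k) (Fin k) M} (hC : C ∈ cubeG k R) :
    ∃ (m : ℕ) (A : Fin m → Matrix (Fin k) (Fin k) M),
      (∀ t i j, A t i j ∈ R) ∧ C = ∑ t, A t ^ 3 := by
  induction hC using AddSubgroup.closure_induction with
  | mem x hx =>
    obtain ⟨A, hA, rfl⟩ := hx
    exact ⟨1, fun _ => A, fun _ => hA, by simp⟩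
  | zero => exact ⟨0, fun _ => 0, fun t => t.elim0, by simp⟩
  | add x y _ _ hx hy =>
    obtain ⟨m, A, hA, rfl⟩ := hx
    obtain ⟨m', B, hB, rfl⟩ := hy
    refine ⟨m + m', Fin.append A B, fun t => ?_, ?_⟩
    · refine Fin.addCases (fun t => ?_) (fun t => ?_) t
      · simpa using hA t
      · simpa using hB t
    · simp [Fin.sum_univ_add]
  | neg x _ hx =>
    obtain ⟨m, A, hA, rfl⟩ := hx
    refine ⟨m, fun t => - A t, fun t i j => by simpa using hA t i j, ?_⟩
    rw [← Finset.sum_neg_distrib]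
    refine Finset.sum_congr rfl fun t _ => ?_
    rw [Odd.neg_pow (by decide)]

/-- the trace set -/
def trT (R : AddSubgroup M) (i : Fin k) : AddSubgroup M :=
  (cubeG k R).comap (singleAddMonoidHom (α := M) i i)

lemma mem_trT {i : Fin k} {x : M} : x ∈ trT R i ↔ single i i x ∈ cubeG k R := Iff.rfl

lemma trT_comm (h1 : (1 : M) ∈ R) {i j : Fin k} (hij : i ≠ j) {x y : M} (hx : x ∈ R)
    (hy : y ∈ R) (hxy : x * y ∈ R) (hyx : y * x ∈ R) (hyxy : y * x * y ∈ R) :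
    x * y - y * x ∈ trT R i := by
  rw [mem_trT]
  have := (cubeG k R).sub_mem (comm_mem0 h1 hij hx hy hxy hyx hyxy) (diag_sub_mem h1 hij hyx)
  convert this using 1
  rw [show single i i (x * y - y * x) = single i i (x * y) - single i i (y * x) from
    map_sub (singleAddMonoidHom (α := M) i i) _ _]
  abel

lemma trT_cube {i : Fin k} {x : M} (hx : x ∈ R) : x ^ 3 ∈ trT R i := by
  rw [mem_trT]
  have := cube_mem (k := k) (single_entries (i := i) (j := i) hx)
  simpa [pow_succ] using this

end PartA

section PartB
variable {M : Type*} [Ring M]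

/-- abstract reduction -/
lemma partB (R W T : AddSubgroup M) (q : ℕ) (hq : q % 3 = 1)
    (hWmul : ∀ x ∈ W, ∀ y ∈ W, x * y ∈ W)
    (hWR : ∀ x ∈ W, q • x ∈ R)
    (hT1 : ∀ x y, x ∈ R → y ∈ R → x * y ∈ R → y * x ∈ R → y * x * y ∈ R → x * y - y * x ∈ T)
    (hT2 : ∀ x ∈ R, (3 : ℕ) • x ∈ T) (hT3 : ∀ x ∈ R, x ^ 3 ∈ T) :
    (∀ x ∈ W, ∀ y ∈ W, q • (x * y - y * x) ∈ T) ∧ (∀ x ∈ W, q • ((3 : ℕ) • x) ∈ T) ∧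
    (∀ x ∈ W, q • (x ^ 3) ∈ T) ∧
    (∀ x ∈ R, q • x ∈ T → x ∈ T) := by
  obtain ⟨m, hm⟩ : ∃ m, q = 3 * m + 1 := ⟨q / 3, by omega⟩
  have key : ∀ x ∈ R, q • x ∈ T → x ∈ T := by
    intro x hx h
    have := T.sub_mem h (T.nsmul_mem (hT2 x hx) m)
    rw [hm, add_smul, smul_smul, mul_comm m 3, one_smul] at this
    simpa using this
  have hRW : ∀ (a b : ℕ) (x : M), x ∈ W → (a * q) • x ∈ R := fun a b x hx => by
    rw [mul_smul]; exact R.nsmul_mem (hWR x hx) a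
  refine ⟨?_, ?_, ?_, key⟩
  · intro x hx y hy
    refine key _ (hWR _ (W.sub_mem (hWmul _ hx _ hy) (hWmul _ hy _ hx))) ?_
    have h := hT1 (q • x) (q • y) (hWR _ hx) (hWR _ hy)
      (by rw [smul_mul_smul_comm]; exact hRW q 0 _ (hWmul _ hx _ hy))
      (by rw [smul_mul_smul_comm]; exact hRW q 0 _ (hWmul _ hy _ hx))
      (by rw [smul_mul_smul_comm, smul_mul_smul_comm]
          exact hRW (q * q) 0 _ (hWmul _ (hWmul _ hy _ hx) _ hy))
    rwa [smul_mul_smul_comm, smul_mul_smul_comm, ← smul_sub, mul_smul] at h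
  · intro x hx
    rw [smul_comm]; exact hT2 _ (hWR _ hx)
  · intro x hx
    have h3 : x ^ 3 ∈ W := by
      rw [pow_succ, pow_two]; exact hWmul _ (hWmul _ hx _ hx) _ hx
    refine key _ (hWR _ h3) (key _ (R.nsmul_mem (hWR _ h3) _) ?_)
    have := hT3 _ (hWR _ hx)
    rw [smul_pow] at this
    rwa [smul_smul, smul_smul, show q * q * q = q ^ 3 by ring]

end PartB

section PartC
variable {M : Type*} [Ring M] {O : Type*} [CommRing O]

/-- the lattice `∑_{i<n} U^i D(O)` -/
def lat (D : O →+* M) (U : M) (n : ℕ) : AddSubgroup M :=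
  AddSubgroup.closure {x | ∃ i < n, ∃ z : O, x = U ^ i * D z}

variable {D : O →+* M} {S : O →+* O} {U Y : M} {n p σ : ℕ} {lam : ℤ}

lemma lat_mem {i : ℕ} (hi : i < n) (z : O) : U ^ i * D z ∈ lat D U n :=
  AddSubgroup.subset_closure ⟨i, hi, z, rfl⟩

lemma lat_mono {m m' : ℕ} (h : m ≤ m') : lat D U m ≤ lat D U m' := by
  apply AddSubgroup.closure_mono
  rintro x ⟨i, hi, z, rfl⟩
  exact ⟨i, hi.trans_le h, z, rfl⟩

/-- to check that an additive map sends `lat` into a subgroup -/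
lemma lat_map {m : ℕ} (f : M →+ M) (K : AddSubgroup M)
    (h : ∀ i < m, ∀ z : O, f (U ^ i * D z) ∈ K) {x : M} (hx : x ∈ lat D U m) : f x ∈ K := by
  have : lat D U m ≤ K.comap f := by
    rw [lat, AddSubgroup.closure_le]
    rintro x ⟨i, hi, z, rfl⟩
    exact h i hi z
  exact this hx

lemma lat_pow_mem (hn : 0 < n) (hU : U ^ n = (σ : M)) (i : ℕ) (z : O) :
    U ^ i * D z ∈ lat D U n := by
  have h : U ^ i * D z = (σ ^ (i / n)) • (U ^ (i % n) * D z) := by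
    conv_lhs => rw [← Nat.div_add_mod i n, pow_add, pow_mul, hU]
    rw [nsmul_eq_mul, mul_assoc]; push_cast; rfl
  rw [h]
  exact AddSubgroup.nsmul_mem _ (lat_mem (Nat.mod_lt _ hn) z) _

lemma D_mul_pow (hDU : ∀ z, D z * U = U * D (S z)) (j : ℕ) (z : O) :
    D z * U ^ j = U ^ j * D ((S ^ j) z) := by
  induction j generalizing z with
  | zero => simp
  | succ j ih =>
    rw [pow_succ', ← mul_assoc, hDU, mul_assoc, ih, ← mul_assoc, pow_succ]
    rfl

lemma lat_mul (hn : 0 < n) (hU : U ^ n = (σ : M)) (hDU : ∀ z, D z * U = U * D (S z)) :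
    ∀ x ∈ lat D U n, ∀ y ∈ lat D U n, x * y ∈ lat D U n := by
  intro x hx y hy
  refine lat_map (AddMonoidHom.mulLeft x) _ (fun j _ w => ?_) hy
  refine lat_map (AddMonoidHom.mulRight (U ^ j * D w)) _ (fun i _ z => ?_) hx
  have : U ^ i * D z * (U ^ j * D w) = U ^ (i + j) * D ((S ^ j) z * w) := by
    rw [mul_assoc, ← mul_assoc (D z), D_mul_pow hDU, pow_add, map_mul]
    simp only [mul_assoc]
  simp only [AddMonoidHom.coe_mulRight, this]
  exact lat_pow_mem hn hU _ _

lemma lat_pow (hn : 0 < n) (hU : U ^ n = (σ : M)) (hDU : ∀ z, D z * U = U * D (S z))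
    {x : M} (hx : x ∈ lat D U n) (i : ℕ) : x ^ i ∈ lat D U n := by
  induction i with
  | zero => simpa using lat_mem (D := D) (U := U) hn 1
  | succ i ih => rw [pow_succ]; exact lat_mul hn hU hDU _ ih _ hx

lemma D_mem (hn : 0 < n) (z : O) : D z ∈ lat D U n := by
  simpa using lat_mem (D := D) (U := U) hn z

/-- `p^n R ⊆ W` -/
lemma latY_sub (hn : 0 < n) (hU : U ^ n = (σ : M)) (hDU : ∀ z, D z * U = U * D (S z))
    (α : O) (hY : p • Y = ((lam : M) - U) * D α) {x : M} (hx : x ∈ lat D Y n) :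
    (p ^ n) • x ∈ lat D U n := by
  have hUm : U ∈ lat D U n := by simpa using lat_pow_mem (D := D) hn hU 1 1
  have hpY : p • Y ∈ lat D U n := by
    rw [hY]
    refine lat_mul hn hU hDU _ (sub_mem ?_ hUm) _ (D_mem hn _)
    simpa using D_mem (D := D) (U := U) hn (lam : O)
  refine lat_map (smulAddHom ℕ M (p ^ n)) _ (fun i hi z => ?_) hx
  have : (p ^ n) • (Y ^ i * D z) = (p ^ (n - i)) • ((p • Y) ^ i * D z) := by
    rw [smul_pow, smul_mul_assoc, smul_smul, ← pow_add, Nat.sub_add_cancel hi.le]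
  simp only [smulAddHom_apply]
  rw [this]
  exact AddSubgroup.nsmul_mem _ (lat_mul hn hU hDU _ (lat_pow hn hU hDU hpY i) _ (D_mem hn z)) _

lemma D_mul_latY (hDU : ∀ z, D z * U = U * D (S z))
    (α : O) (hY : p • Y = ((lam : M) - U) * D α) (j : ℕ) (z w : O) :
    (p ^ j) • (D z * (Y ^ j * D w)) ∈ lat D Y (j + 1) := by
  induction j generalizing z with
  | zero => simpa using D_mem (D := D) (U := Y) (Nat.zero_lt_one) (z * w)
  | succ j ih =>
    have h1 : p • (D z * Y) = p • (Y * D (S z)) + lam • D ((z - S z) * α) := by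
      have e1 : p • (D z * Y) = D z * (p • Y) := by rw [mul_smul_comm]
      have e2 : p • (Y * D (S z)) = (p • Y) * D (S z) := by rw [smul_mul_assoc]
      have c : D α * D (S z) = D (S z) * D α := by rw [← map_mul, ← map_mul, mul_comm]
      have c2 : D z * (lam : M) = (lam : M) * D z := (Int.cast_commute lam (D z)).symm.eq
      rw [e1, e2, hY, zsmul_eq_mul, map_mul, map_sub, ← mul_assoc, mul_sub, hDU, c2, mul_assoc,
        c]
      noncomm_ring
    have h2 : (p ^ (j + 1)) • (D z * (Y ^ (j + 1) * D w)) =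
        p • (Y * ((p ^ j) • (D (S z) * (Y ^ j * D w)))) +
        lam • ((p ^ j) • (D ((z - S z) * α) * (Y ^ j * D w))) := by
      calc (p ^ (j + 1)) • (D z * (Y ^ (j + 1) * D w))
          = (p ^ j) • ((p • (D z * Y)) * (Y ^ j * D w)) := by
            rw [smul_mul_assoc, smul_smul, ← pow_succ, pow_succ' Y]; simp only [mul_assoc]
        _ = _ := by
            rw [h1, add_mul, smul_add, smul_mul_assoc, smul_mul_assoc, mul_smul_comm,
              smul_comm (p ^ j) lam, smul_comm (p ^ j) p, mul_assoc]
    rw [h2]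
    refine add_mem (AddSubgroup.nsmul_mem _ ?_ _)
      (AddSubgroup.zsmul_mem _ (lat_mono (Nat.le_succ _) (ih _)) _)
    refine lat_map (AddMonoidHom.mulLeft Y) _ (fun i hi v => ?_) (ih (S z))
    simp only [AddMonoidHom.coe_mulLeft, ← mul_assoc, ← pow_succ']
    exact lat_mem (by omega) v

/-- `p^e U^m D(O) ⊆ R_m` -/
lemma latU_sub (hDU : ∀ z, D z * U = U * D (S z))
    (α α' : O) (N : ℕ) (hα : α * α' = (p : O) ^ N)
    (hY : p • Y = ((lam : M) - U) * D α) (m : ℕ) :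
    ∃ e : ℕ, ∀ z : O, (p ^ e) • (U ^ m * D z) ∈ lat D Y (m + 1) := by
  induction m with
  | zero => exact ⟨0, fun z => by simpa using D_mem (D := D) (U := Y) Nat.zero_lt_one z⟩
  | succ m ih =>
    obtain ⟨e, he⟩ := ih
    have hpU : (p ^ N) • U = lam • (p ^ N • (1 : M)) - p • (Y * D α') := by
      have e2 : p • (Y * D α') = (p • Y) * D α' := by rw [smul_mul_assoc]
      rw [e2, hY, mul_assoc, ← map_mul, hα, map_pow, map_natCast, sub_mul, zsmul_eq_mul,
        nsmul_eq_mul, nsmul_eq_mul]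
      push_cast
      rw [mul_one, ((Nat.cast_commute p U).pow_left N).eq]
      noncomm_ring
    refine ⟨m + N + e, fun z => ?_⟩
    have h1 : p ^ (m + N + e) • (U ^ (m + 1) * D z) =
        p ^ m • ((p ^ N • U) * (p ^ e • (U ^ m * D z))) := by
      rw [smul_mul_smul_comm, smul_smul, pow_succ', pow_add, pow_add]; simp only [mul_assoc]
    rw [h1, hpU]
    refine lat_map ((smulAddHom ℕ M (p ^ m)).comp (AddMonoidHom.mulLeft _)) _
      (fun i hi v => ?_) (he z)
    simp only [AddMonoidHom.comp_apply, AddMonoidHom.coe_mulLeft, smulAddHom_apply]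
    have h2 : p ^ m • ((lam • (p ^ N • (1 : M)) - p • (Y * D α')) * (Y ^ i * D v)) =
        p ^ m • lam • p ^ N • (Y ^ i * D v) -
          (p ^ (m - i) * p) • (Y * (p ^ i • (D α' * (Y ^ i * D v)))) := by
      rw [sub_mul, smul_sub, smul_mul_assoc, smul_mul_assoc, one_mul, smul_mul_assoc,
        mul_smul_comm, smul_smul (p ^ (m - i) * p), mul_right_comm, ← pow_add,
        Nat.sub_add_cancel (by omega), mul_smul, mul_assoc Y]
    rw [h2]
    refine sub_mem (AddSubgroup.nsmul_mem _ (AddSubgroup.zsmul_mem _ (AddSubgroup.nsmul_mem _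
      (lat_mem (by omega) v) _) _) _) (AddSubgroup.nsmul_mem _ ?_ _)
    refine lat_map (AddMonoidHom.mulLeft Y) _ (fun i' hi' v => ?_)
      (D_mul_latY hDU α hY i α' v)
    simp only [AddMonoidHom.coe_mulLeft, ← mul_assoc, ← pow_succ']
    exact lat_mem (by omega) v

lemma latU_sub' (hDU : ∀ z, D z * U = U * D (S z))
    (α α' : O) (N : ℕ) (hα : α * α' = (p : O) ^ N)
    (hY : p • Y = ((lam : M) - U) * D α) (n : ℕ) :
    ∃ e : ℕ, ∀ x ∈ lat D U n, (p ^ e) • x ∈ lat D Y n := by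
  choose e he using latU_sub hDU α α' N hα hY
  refine ⟨∑ m ∈ Finset.range n, e m, fun x hx => ?_⟩
  refine lat_map (smulAddHom ℕ M _) _ (fun i hi z => ?_) hx
  have hle : e i ≤ ∑ m ∈ Finset.range n, e m :=
    Finset.single_le_sum (fun _ _ => Nat.zero_le _) (Finset.mem_range.2 hi)
  rw [smulAddHom_apply, ← Nat.sub_add_cancel hle, pow_add, mul_smul]
  exact AddSubgroup.nsmul_mem _ (lat_mono (by omega) (he i z)) _

/-- Main abstract theorem. -/
theorem abstract_main (hn : 1 < n) (hp3 : p % 3 ≠ 0) (hσ3 : σ % 3 ≠ 0)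
    (hU : U ^ n = (σ : M)) (hDU : ∀ z, D z * U = U * D (S z))
    (α α' : O) (N : ℕ) (hα : α * α' = (p : O) ^ N)
    (hY : p • Y = ((lam : M) - U) * D α)
    (e0 : O) (hspan : ∀ z : O, z ∈ AddSubgroup.closure (Set.range fun s : ℕ => (S ^ s) e0))
    (F1 : ∀ i, 0 < i → i < n → ∀ K : AddSubgroup O, (∀ z, z - S z ∈ K) →
      e0 * e0 - (S ^ i) e0 * e0 + p • e0 ∈ K)
    (F2 : ∀ K : AddSubgroup O, (∀ z, z - S z ∈ K) → (∀ z, (3 : ℕ) • z ∈ K) → e0 ^ 3 - e0 ∈ K)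
    (k : ℕ) (hk : 2 ≤ k) (C : Matrix (Fin k) (Fin k) M) (hC : ∀ i j, C i j ∈ lat D Y n) :
    C ∈ cubeG k (lat D Y n) := by
  have hn0 : 0 < n := by omega
  obtain ⟨b, hb⟩ := latU_sub' hDU α α' N hα hY n
  set q := p ^ (2 * (n + b)) with hq
  have hq1 : q % 3 = 1 := by
    rw [hq, pow_mul]
    have : p ^ 2 % 3 = 1 := by
      rcases (by omega : p % 3 = 1 ∨ p % 3 = 2) with h | h <;> simp [Nat.pow_mod, h]
    rw [Nat.pow_mod, this]; simp
  have hq_n : q = p ^ (n + 2 * b) * p ^ n := by rw [hq, ← pow_add]; congr 1; ring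
  have hq_b : q = p ^ (2 * n + b) * p ^ b := by rw [hq, ← pow_add]; congr 1; ring
  have hRW : ∀ x ∈ lat D Y n, q • x ∈ lat D U n := fun x hx => by
    rw [hq_n, mul_smul]; exact AddSubgroup.nsmul_mem _ (latY_sub hn0 hU hDU α hY hx) _
  have hWR : ∀ x ∈ lat D U n, q • x ∈ lat D Y n := fun x hx => by
    rw [hq_b, mul_smul]; exact AddSubgroup.nsmul_mem _ (hb x hx) _
  have h1 : (1 : M) ∈ lat D Y n := by simpa using D_mem (D := D) (U := Y) hn0 1
  let i0 : Fin k := ⟨0, by omega⟩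
  let i1 : Fin k := ⟨1, by omega⟩
  have hi : i0 ≠ i1 := by simp [i0, i1]
  obtain ⟨B1, B2, B3, B4⟩ := partB (lat D Y n) (lat D U n) (trT (lat D Y n) i0) q hq1
    (lat_mul hn0 hU hDU) hWR (fun x y => trT_comm h1 hi) (fun x => three_mem0 h1 hi)
    (fun x => trT_cube)
  set T := trT (lat D Y n) i0
  refine all_mem h1 i0 (fun x hx => B4 x hx (B4 _ (AddSubgroup.nsmul_mem _ hx _) ?_)) C hC
  have hUm : ∀ i z, U ^ i * D z ∈ lat D U n := lat_pow_mem hn0 hU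
  suffices H : ∀ i < n, ∀ z : O, q • (U ^ i * D z) ∈ T from
    lat_map (smulAddHom ℕ M q) T H (hRW x hx)
  intro i hin
  -- the set of good z
  let K : AddSubgroup O := T.comap ((smulAddHom ℕ M q).comp
    ((AddMonoidHom.mulLeft (U ^ i)).comp D.toAddMonoidHom))
  have hK : ∀ z, z ∈ K ↔ q • (U ^ i * D z) ∈ T := fun z => Iff.rfl
  have hK3 : ∀ z, (3 : ℕ) • z ∈ K := fun z => by
    rw [hK, map_nsmul, mul_smul_comm]; exact B2 _ (hUm i z)
  have hcop : ∀ c : ℕ, c % 3 ≠ 0 → ∀ z, c • z ∈ K → z ∈ K := by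
    intro c hc z hz
    rcases (by omega : c % 3 = 1 ∨ c % 3 = 2) with h | h
    · have := K.sub_mem hz (K.nsmul_mem (hK3 z) (c / 3))
      rw [← mul_smul, show c • z = (c / 3 * 3 + 1) • z by congr 1; omega, add_smul] at this
      simpa using this
    · have := K.sub_mem (K.nsmul_mem (hK3 z) (c / 3 + 1)) hz
      rw [← mul_smul, show (c / 3 + 1) * 3 = c + 1 by omega, add_smul] at this
      simpa using this
  have hJ : ∀ z, z - S z ∈ K := by
    intro z
    have comm : ∀ j, q • (U ^ (j + 1) * D (z - S z)) ∈ T := by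
      intro j
      have := B1 (U ^ 1 * D 1) (hUm _ _) (U ^ j * D z) (hUm _ _)
      have e : U ^ 1 * D 1 * (U ^ j * D z) - U ^ j * D z * (U ^ 1 * D 1) =
          U ^ (j + 1) * D (z - S z) := by
        rw [map_one, mul_one, pow_one, map_sub, mul_sub, mul_assoc (U ^ j) (D z), hDU,
          ← mul_assoc, ← mul_assoc, ← pow_succ', ← pow_succ]
      rwa [e] at this
    rcases Nat.eq_zero_or_pos i with h0 | h0
    · refine hcop σ hσ3 _ ?_
      have := comm (n - 1)
      rw [hK, h0]
      rw [Nat.sub_add_cancel hn.le, hU] at this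
      rwa [map_nsmul, pow_zero, one_mul, nsmul_eq_mul σ]
    · rw [hK]
      have := comm (i - 1)
      rwa [Nat.sub_add_cancel h0] at this
  have he0 : e0 ∈ K := by
    rcases Nat.eq_zero_or_pos i with h0 | h0
    · have h := F2 K hJ hK3
      have h3 : e0 ^ 3 ∈ K := by
        rw [hK, h0, pow_zero, one_mul, map_pow]
        exact B3 _ (D_mem hn0 _)
      simpa using K.sub_mem h3 h
    · refine hcop p hp3 _ ?_
      have h := F1 i h0 hin K hJ
      have h2 : (S ^ i) e0 * e0 - e0 * e0 ∈ K := by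
        rw [hK]
        have := B1 (D e0) (D_mem hn0 _) (U ^ i * D e0) (hUm _ _)
        have e : D e0 * (U ^ i * D e0) - U ^ i * D e0 * D e0 =
            U ^ i * D ((S ^ i) e0 * e0 - e0 * e0) := by
          rw [← mul_assoc, D_mul_pow hDU, map_sub, map_mul, map_mul]; noncomm_ring
        rwa [e] at this
      have := K.add_mem h h2
      convert this using 1
      abel
  intro z
  rw [← hK]
  have hle : AddSubgroup.closure (Set.range fun s : ℕ => (S ^ s) e0) ≤ K := by
    rw [AddSubgroup.closure_le]
    rintro _ ⟨s, rfl⟩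
    simp only [SetLike.mem_coe]
    induction s with
    | zero => simpa using he0
    | succ s ih =>
      have := K.sub_mem ih (hJ ((S ^ s) e0))
      rw [pow_succ']
      simpa using this
  exact hle (hspan z)

/-- Frobenius fact -/
lemma factF2 {O : Type*} [CommRing O] (S : O →+* O) (n : ℕ) (e0 : O)
    (hspan : ∀ z : O, z ∈ AddSubgroup.closure (Set.range fun s : ℕ => (S ^ s) e0))
    (hsum : ∑ s ∈ Finset.range n, (S ^ s) e0 = -1)
    (K : AddSubgroup O) (hJ : ∀ z, z - S z ∈ K) (h3 : ∀ z, (3 : ℕ) • z ∈ K) :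
    e0 ^ 3 - e0 ∈ K := by
  -- trace
  let tr : O → O := fun z => ∑ s ∈ Finset.range n, (S ^ s) z
  have hS1 : S (tr e0) = tr e0 := by simp only [tr, hsum, map_neg, map_one]
  have htr : ∀ z, ∃ c : ℤ, z - c • e0 ∈ K ∧ tr z = -(c : O) := by
    intro z
    induction hspan z using AddSubgroup.closure_induction with
    | mem x hx =>
      obtain ⟨s, rfl⟩ := hx
      refine ⟨1, ?_, ?_⟩
      · induction s with
        | zero => simp
        | succ s ih =>
          have := K.sub_mem ih (hJ ((S ^ s) e0))
          simp only at this ⊢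
          rw [pow_succ']
          simpa using this
      · have : tr ((S ^ s) e0) = (S ^ s) (tr e0) := by
          simp only [tr, map_sum]
          refine Finset.sum_congr rfl fun i _ => ?_
          rw [← RingHom.comp_apply, ← RingHom.comp_apply]
          change (S ^ i * S ^ s) e0 = (S ^ s * S ^ i) e0
          rw [← pow_add, ← pow_add, add_comm]
        simp only [this, tr, hsum, map_neg, map_one, Int.cast_one]
    | zero => exact ⟨0, by simp, by simp [tr]⟩
    | add x y _ _ hx hy =>
      obtain ⟨a, ha, ha'⟩ := hx
      obtain ⟨b, hb, hb'⟩ := hy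
      refine ⟨a + b, ?_, ?_⟩
      · have := K.add_mem ha hb
        convert this using 1
        rw [add_smul]; abel
      · have : tr (x + y) = tr x + tr y := by simp [tr, Finset.sum_add_distrib]
        rw [this, ha', hb']; push_cast; ring
    | neg x _ hx =>
      obtain ⟨a, ha, ha'⟩ := hx
      refine ⟨-a, ?_, ?_⟩
      · have := K.neg_mem ha
        convert this using 1
        rw [neg_smul]; abel
      · have : tr (-x) = - tr x := by simp [tr]
        rw [this, ha']; push_cast; ring
  obtain ⟨c, hc, hc'⟩ := htr (e0 ^ 3)
  have frob : ∀ m : ℕ, ∃ w : O, (∑ s ∈ Finset.range m, (S ^ s) e0) ^ 3 =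
      ∑ s ∈ Finset.range m, (S ^ s) (e0 ^ 3) + 3 * w := by
    intro m
    induction m with
    | zero => exact ⟨0, by simp⟩
    | succ m ih =>
      obtain ⟨w, hw⟩ := ih
      rw [Finset.sum_range_succ, Finset.sum_range_succ, map_pow]
      generalize ∑ s ∈ Finset.range m, (S ^ s) e0 = x at *
      refine ⟨w + (x ^ 2 * (S ^ m) e0 + x * ((S ^ m) e0) ^ 2), ?_⟩
      linear_combination hw
  obtain ⟨w, hw⟩ := frob n
  rw [hsum] at hw
  have h5 : (c : O) - 1 = 3 * w := by
    have : tr (e0 ^ 3) = ∑ s ∈ Finset.range n, (S ^ s) (e0 ^ 3) := rfl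
    rw [← this, hc'] at hw
    linear_combination hw
  have := K.add_mem hc (h3 (w * e0))
  convert this using 1
  rw [zsmul_eq_mul, nsmul_eq_mul]
  push_cast
  linear_combination (e0) * h5

end PartC

section PartN

@[to_additive]
lemma prod_cyc {N : Type*} [CommMonoid N] (h : ℕ) (F : ℕ → N) (hF : ∀ r, F (r + h) = F r) (a : ℕ) :
    ∏ r ∈ Finset.range h, F (r + a) = ∏ r ∈ Finset.range h, F r := by
  induction a with
  | zero => simp
  | succ a ih =>
    rw [← ih]
    have h1 := Finset.prod_range_succ (fun r => F (r + a)) h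
    have h2 := Finset.prod_range_succ' (fun r => F (r + a)) h
    have h3 : F (h + a) = F (0 + a) := by rw [add_comm h a, hF, zero_add]
    rcases h with _ | h
    · simp
    · rw [Finset.prod_range_succ, Finset.prod_range_succ' (fun r => F (r + a))]
      congr 1
      · refine Finset.prod_congr rfl fun r _ => ?_
        congr 1; ring
      · rw [← h3]; congr 1; ring

variable {n p h g : ℕ} [hpf : Fact p.Prime]

lemma pow_nh (hph : p = n * h + 1) (hg : orderOf (g : ZMod p) = p - 1) :
    (g : ZMod p) ^ (n * h) = 1 := by
  rw [show n * h = orderOf (g : ZMod p) by rw [hg]; omega, pow_orderOf_eq_one]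

lemma g_ne_zero (hn : 1 < n) (hph : p = n * h + 1) (hg : orderOf (g : ZMod p) = p - 1) :
    (g : ZMod p) ≠ 0 := by
  intro h0
  have h1 := pow_nh hph hg
  have := hpf.out.two_le
  rw [h0, zero_pow (by omega)] at h1
  exact zero_ne_one h1

lemma g_inj (hph : p = n * h + 1) (hg : orderOf (g : ZMod p) = p - 1) {a b : ℕ}
    (ha : a < n * h) (hb : b < n * h) (hab : (g : ZMod p) ^ a = (g : ZMod p) ^ b) : a = b := by
  refine pow_injOn_Iio_orderOf (x := (g : ZMod p)) ?_ ?_ hab <;>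
  · rw [Set.mem_Iio, hg]; omega

lemma erase_eq (hn : 1 < n) (hph : p = n * h + 1) (hg : orderOf (g : ZMod p) = p - 1) :
    Finset.univ.erase (0 : ZMod p) =
      (Finset.range (n * h)).image (fun m => (g : ZMod p) ^ m) := by
  symm
  apply Finset.eq_of_subset_of_card_le
  · intro x hx
    obtain ⟨m, _, rfl⟩ := Finset.mem_image.1 hx
    simp [g_ne_zero hn hph hg]
  · rw [Finset.card_erase_of_mem (Finset.mem_univ _), Finset.card_univ, ZMod.card,
      Finset.card_image_of_injOn]
    · simp; omega
    · intro a ha b hb hab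
      simp only [Finset.coe_range, Set.mem_Iio] at ha hb
      exact g_inj hph hg ha hb hab

lemma exists_pow (hn : 1 < n) (hph : p = n * h + 1) (hg : orderOf (g : ZMod p) = p - 1)
    {x : ZMod p} (hx : x ≠ 0) : ∃ m, m < n * h ∧ (g : ZMod p) ^ m = x := by
  have : x ∈ Finset.univ.erase (0 : ZMod p) := by simp [hx]
  rw [erase_eq hn hph hg] at this
  simpa using this

@[to_additive]
lemma prod_range_mul' {N : Type*} [CommMonoid N] (F : ℕ → N) (n h : ℕ) :
    ∏ m ∈ Finset.range (n * h), F m =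
      ∏ s ∈ Finset.range n, ∏ r ∈ Finset.range h, F (n * r + s) := by
  induction h with
  | zero => simp
  | succ h ih =>
    rw [mul_add, mul_one, Finset.prod_range_add, ih, ← Finset.prod_mul_distrib]
    refine Finset.prod_congr rfl fun s _ => ?_
    rw [Finset.prod_range_succ]

@[to_additive]
lemma prod_erase {N : Type*} [CommMonoid N] (hn : 1 < n) (hph : p = n * h + 1)
    (hg : orderOf (g : ZMod p) = p - 1) (F : ZMod p → N) :
    ∏ x ∈ Finset.univ.erase (0 : ZMod p), F x =
      ∏ s ∈ Finset.range n, ∏ r ∈ Finset.range h, F ((g : ZMod p) ^ (n * r + s)) := by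
  rw [erase_eq hn hph hg, Finset.prod_image]
  · rw [prod_range_mul' (fun m => F ((g : ZMod p) ^ m))]
  · intro a ha b hb hab
    simp only [Finset.coe_range, Set.mem_Iio] at ha hb
    exact g_inj hph hg ha hb hab

/-- standard character -/
def chi (p : ℕ) [Fact p.Prime] : AddChar (ZMod p) ℂ := ZMod.stdAddChar

lemma chi_nat (m : ℕ) : chi p (m : ZMod p) = zetaC p ^ m := by
  have := ZMod.stdAddChar_coe (N := p) (m : ℤ)
  rw [Int.cast_natCast] at this
  rw [chi, this, zetaC, ← Complex.exp_nat_mul]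
  congr 1
  push_cast
  ring

lemma zeta_prim : IsPrimitiveRoot (zetaC p) p :=
  Complex.isPrimitiveRoot_exp p hpf.out.ne_zero

lemma chi_sum : ∑ x : ZMod p, chi p x = 0 := by
  apply AddChar.sum_eq_zero_of_ne_one
  intro h1
  have h2 : chi p ((1 : ℕ) : ZMod p) = 1 := by rw [h1]; simp
  rw [chi_nat, pow_one] at h2
  exact zeta_prim.ne_one hpf.out.one_lt h2

lemma prod_one_sub_chi : ∏ x ∈ Finset.univ.erase (0 : ZMod p), (1 - chi p x) = p := by
  obtain ⟨m, hm⟩ : ∃ m, p = m + 1 := ⟨p - 1, by have := hpf.out.pos; omega⟩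
  have hz : IsPrimitiveRoot (zetaC p) (m + 1) := hm ▸ zeta_prim
  have h1 := hz.prod_one_sub_pow_eq_order
  have h2 : ((p : ℕ) : ℂ) = m + 1 := by rw [hm]; push_cast; ring
  rw [h2, ← h1]
  symm
  refine Finset.prod_bij (fun k _ => ((k + 1 : ℕ) : ZMod p)) ?_ ?_ ?_ ?_
  · intro k hk
    simp only [Finset.mem_erase, Finset.mem_univ, and_true]
    rw [Ne, ZMod.natCast_eq_zero_iff]
    intro hd
    have := Nat.le_of_dvd (by omega) hd
    have := Finset.mem_range.1 hk
    omega
  · intro a ha b hb hab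
    have ha := Finset.mem_range.1 ha
    have hb := Finset.mem_range.1 hb
    rw [ZMod.natCast_eq_natCast_iff'] at hab
    rw [Nat.mod_eq_of_lt (by omega), Nat.mod_eq_of_lt (by omega)] at hab
    omega
  · intro b hb
    have hb0 : b ≠ 0 := by simpa using hb
    have hv : b.val ≠ 0 := by rwa [Ne, ZMod.val_eq_zero]
    have hlt := b.val_lt
    refine ⟨b.val - 1, Finset.mem_range.2 (by omega), ?_⟩
    rw [Nat.sub_add_cancel (by omega), ZMod.natCast_zmod_val]
  · intro a _
    rw [chi_nat]

/-- evaluation of the group ring -/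
def evΛ (p : ℕ) [Fact p.Prime] : AddMonoidAlgebra ℤ (ZMod p) →+* ℂ :=
  (AddMonoidAlgebra.lift ℤ ℂ (ZMod p) (chi p).toMonoidHom).toRingHom

lemma evΛ_single (x : ZMod p) (a : ℤ) :
    evΛ p (AddMonoidAlgebra.single x a) = a * chi p x := by
  simp [evΛ]

/-- multiplication by `c` on the group ring -/
def tauΛ (p : ℕ) [Fact p.Prime] (c : ZMod p) :
    AddMonoidAlgebra ℤ (ZMod p) →+* AddMonoidAlgebra ℤ (ZMod p) :=
  AddMonoidAlgebra.mapDomainRingHom ℤ (AddMonoidHom.mulLeft c)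

lemma tauΛ_single (c x : ZMod p) (a : ℤ) :
    tauΛ p c (AddMonoidAlgebra.single x a) = AddMonoidAlgebra.single (c * x) a := by
  simp [tauΛ]

/-- invariants -/
def invΛ (p : ℕ) [Fact p.Prime] (c : ZMod p) : Subring (AddMonoidAlgebra ℤ (ZMod p)) :=
  RingHom.eqLocus (tauΛ p c) (RingHom.id _)

/-- the ring of integers of `Z` as a subring of `ℂ` -/
def OC (p : ℕ) [Fact p.Prime] (c : ZMod p) : Subring ℂ := (invΛ p c).map (evΛ p)

lemma inv_coeff {c : ZMod p} (hc : c ≠ 0) {f : AddMonoidAlgebra ℤ (ZMod p)} (hf : f ∈ invΛ p c)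
    (x : ZMod p) : f.coeff (c * x) = f.coeff x := by
  have h1 : tauΛ p c f = f := hf
  conv_lhs => rw [← h1]
  simp only [tauΛ, AddMonoidAlgebra.mapDomainRingHom_apply, AddMonoidAlgebra.coeff_mapDomain]
  exact Finsupp.mapDomain_apply (mul_right_injective₀ hc) _ x

lemma inv_coeff_pow {c : ZMod p} (hc : c ≠ 0) {f : AddMonoidAlgebra ℤ (ZMod p)}
    (hf : f ∈ invΛ p c) (r : ℕ) (x : ZMod p) : f.coeff (c ^ r * x) = f.coeff x := by
  induction r with
  | zero => simp
  | succ r ih => rw [pow_succ', mul_assoc, inv_coeff hc hf, ih]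

lemma evΛ_eq (f : AddMonoidAlgebra ℤ (ZMod p)) :
    evΛ p f = ∑ x : ZMod p, (f.coeff x : ℂ) * chi p x := by
  have : evΛ p f = f.coeff.sum fun a b => b • chi p a := by
    simp [evΛ, AddMonoidAlgebra.lift_apply]
  rw [this, Finsupp.sum_fintype _ _ (by simp)]
  simp

/-- generalized period -/
def per (p n h g : ℕ) [Fact p.Prime] (x : ZMod p) : ℂ :=
  ∑ r ∈ Finset.range h, chi p ((g : ZMod p) ^ (n * r) * x)

lemma per_pow (s : ℕ) : per p n h g ((g : ZMod p) ^ s) = gaussPeriod n p h g s := by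
  simp only [per, gaussPeriod]
  refine Finset.sum_congr rfl fun r _ => ?_
  rw [← pow_add, ← chi_nat]; push_cast; rfl

lemma per_zero : per p n h g 0 = h := by simp [per]

lemma per_shift (hph : p = n * h + 1) (hg : orderOf (g : ZMod p) = p - 1) (r : ℕ) (x : ZMod p) :
    per p n h g ((g : ZMod p) ^ (n * r) * x) = per p n h g x := by
  have := sum_cyc h (fun r => chi p ((g : ZMod p) ^ (n * r) * x))
    (fun r => by rw [mul_add, pow_add, pow_nh hph hg, mul_one]) r
  rw [per, per, ← this]
  refine Finset.sum_congr rfl fun r' _ => ?_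
  rw [mul_add, pow_add, mul_assoc]

lemma per_ne (hn : 1 < n) (hph : p = n * h + 1) (hg : orderOf (g : ZMod p) = p - 1)
    {x : ZMod p} (hx : x ≠ 0) : ∃ s, s < n ∧ per p n h g x = gaussPeriod n p h g s := by
  obtain ⟨m, hm, rfl⟩ := exists_pow hn hph hg hx
  refine ⟨m % n, Nat.mod_lt _ (by omega), ?_⟩
  conv_lhs => rw [← Nat.div_add_mod m n, pow_add, per_shift hph hg, per_pow]

lemma sum_periods (hn : 1 < n) (hph : p = n * h + 1) (hg : orderOf (g : ZMod p) = p - 1) :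
    ∑ s ∈ Finset.range n, gaussPeriod n p h g s = -1 := by
  have h1 := chi_sum (p := p)
  rw [← Finset.add_sum_erase _ _ (Finset.mem_univ 0), sum_erase hn hph hg] at h1
  have h2 : ∀ s, gaussPeriod n p h g s =
      ∑ r ∈ Finset.range h, chi p ((g : ZMod p) ^ (n * r + s)) := fun s => by
    rw [← per_pow, per]; simp only [pow_add]
  simp only [h2]
  simp only [AddChar.map_zero_eq_one] at h1
  linear_combination h1

lemma per_mem (hph : p = n * h + 1) (hg : orderOf (g : ZMod p) = p - 1) (x : ZMod p) :
    per p n h g x ∈ OC p ((g : ZMod p) ^ n) := by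
  refine ⟨∑ r ∈ Finset.range h, AddMonoidAlgebra.single ((g : ZMod p) ^ (n * r) * x) 1, ?_, ?_⟩
  · change tauΛ p _ _ = _
    rw [map_sum]
    have := sum_cyc h (fun r => AddMonoidAlgebra.single ((g : ZMod p) ^ (n * r) * x) (1 : ℤ))
      (fun r => by rw [mul_add, pow_add, pow_nh hph hg, mul_one]) 1
    rw [RingHom.id_apply, ← this]
    refine Finset.sum_congr rfl fun r _ => ?_
    rw [tauΛ_single, mul_add, mul_one, pow_add, ← mul_assoc, mul_comm ((g : ZMod p) ^ n)]
  · rw [map_sum, per]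
    refine Finset.sum_congr rfl fun r _ => ?_
    rw [evΛ_single]; simp

lemma bet_mem (hph : p = n * h + 1) (hg : orderOf (g : ZMod p) = p - 1) (s : ℕ) :
    ∏ r ∈ Finset.range h, (1 - chi p ((g : ZMod p) ^ (n * r + s))) ∈ OC p ((g : ZMod p) ^ n) := by
  refine ⟨∏ r ∈ Finset.range h, (1 - AddMonoidAlgebra.single ((g : ZMod p) ^ (n * r + s)) 1), ?_, ?_⟩
  · change tauΛ p _ _ = _
    rw [map_prod]
    have := prod_cyc h (fun r => 1 - AddMonoidAlgebra.single ((g : ZMod p) ^ (n * r + s)) (1 : ℤ))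
      (fun r => by rw [mul_add, add_right_comm, pow_add _ _ (n * h), pow_nh hph hg, mul_one]) 1
    rw [RingHom.id_apply, ← this]
    refine Finset.prod_congr rfl fun r _ => ?_
    rw [map_sub, map_one, tauΛ_single, ← pow_add]
    congr 3; ring
  · rw [map_prod]
    refine Finset.prod_congr rfl fun r _ => ?_
    rw [map_sub, map_one, evΛ_single]; simp

lemma OC_expand (hn : 1 < n) (hph : p = n * h + 1) (hg : orderOf (g : ZMod p) = p - 1) {z : ℂ}
    (hz : z ∈ OC p ((g : ZMod p) ^ n)) :
    ∃ c : ℕ → ℤ, z = ∑ s ∈ Finset.range n, c s • gaussPeriod n p h g s := by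
  obtain ⟨f, hf, rfl⟩ := hz
  have hc : (g : ZMod p) ^ n ≠ 0 := pow_ne_zero _ (g_ne_zero hn hph hg)
  refine ⟨fun s => f.coeff ((g : ZMod p) ^ s) - f.coeff 0, ?_⟩
  rw [evΛ_eq, ← Finset.add_sum_erase _ _ (Finset.mem_univ 0), sum_erase hn hph hg]
  have h2 : ∀ s, ∑ r ∈ Finset.range h, (f.coeff ((g : ZMod p) ^ (n * r + s)) : ℂ) *
      chi p ((g : ZMod p) ^ (n * r + s)) =
      f.coeff ((g : ZMod p) ^ s) * gaussPeriod n p h g s := fun s => by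
    rw [← per_pow, per, Finset.mul_sum]
    refine Finset.sum_congr rfl fun r _ => ?_
    rw [pow_add, pow_mul, inv_coeff_pow hc hf]
  simp only [h2, sub_smul, Finset.sum_sub_distrib, ← Finset.smul_sum, sum_periods hn hph hg]
  simp [zsmul_eq_mul]
  ring

lemma per_mul (hph : p = n * h + 1) (hg : orderOf (g : ZMod p) = p - 1) (b : ℕ) :
    gaussPeriod n p h g b * gaussPeriod n p h g 0 =
      ∑ r ∈ Finset.range h, per p n h g (1 + (g : ZMod p) ^ (n * r + b)) := by
  rw [← per_pow b, ← per_pow 0]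
  have h1 : ∀ r, per p n h g ((g : ZMod p) ^ b) = ∑ r' ∈ Finset.range h,
      chi p ((g : ZMod p) ^ (n * r) * (g : ZMod p) ^ (n * r' + b)) := by
    intro r
    rw [← per_shift hph hg r, per]
    refine Finset.sum_congr rfl fun r' _ => ?_
    rw [pow_add _ (n * r') b]; congr 1; ring
  rw [per.eq_1 p n h g ((g : ZMod p) ^ 0), Finset.mul_sum]
  simp only [per.eq_1 p n h g (1 + _)]
  rw [Finset.sum_comm]
  refine Finset.sum_congr rfl fun r _ => ?_
  rw [h1 r, Finset.sum_mul]
  refine Finset.sum_congr rfl fun r' _ => ?_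
  rw [← AddChar.map_add_eq_mul, pow_zero, mul_add, add_comm]

lemma count_neg_one (hn : 1 < n) (hnodd : Odd n) (hph : p = n * h + 1)
    (hg : orderOf (g : ZMod p) = p - 1) :
    ∃ r0 < h, ∀ i < n, ∀ r < h, (1 + (g : ZMod p) ^ (n * r + i) = 0 ↔ i = 0 ∧ r = r0) := by
  have hp2 : 2 < p := by
    have := hpf.out.two_le
    rcases Nat.eq_zero_or_pos h with h0 | h0
    · rw [h0] at hph; omega
    · have : n * 1 ≤ n * h := Nat.mul_le_mul_left _ h0
      omega
  have hpodd : Odd p := hpf.out.odd_of_ne_two (by omega)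
  have heven : Even h := by
    have : Even (n * h) := by
      rw [hph] at hpodd
      by_contra hcon
      rw [Nat.not_even_iff_odd] at hcon
      exact (Nat.not_even_iff_odd.2 hpodd) (hcon.add_one)
    rcases Nat.even_mul.1 this with h1 | h1
    · exact absurd h1 (Nat.not_even_iff_odd.2 hnodd)
    · exact h1
  obtain ⟨r0, hr0⟩ := heven
  have hh : 0 < h := by
    rcases Nat.eq_zero_or_pos h with h0 | h0
    · rw [h0] at hph; omega
    · exact h0
  have hn1 : (g : ZMod p) ^ (n * r0) = -1 := by
    have h1 : ((g : ZMod p) ^ (n * r0)) * ((g : ZMod p) ^ (n * r0)) = 1 := by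
      rw [← pow_add, ← mul_add, ← hr0, pow_nh hph hg]
    rcases mul_self_eq_one_iff.1 h1 with h2 | h2
    · exfalso
      have : n * r0 = 0 := by
        refine g_inj hph hg ?_ ?_ (by rw [h2, pow_zero])
        · exact Nat.mul_lt_mul_of_pos_left (by omega) (by omega)
        · exact Nat.mul_pos (by omega) hh
      rcases Nat.mul_eq_zero.1 this with h3 | h3 <;> omega
    · exact h2
  refine ⟨r0, by omega, fun i hi r hr => ⟨fun h1 => ?_, ?_⟩⟩
  · have h2 : (g : ZMod p) ^ (n * r + i) = (g : ZMod p) ^ (n * r0) := by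
      rw [hn1]; linear_combination h1
    have h3 : n * r + i = n * r0 := by
      refine g_inj hph hg ?_ (Nat.mul_lt_mul_of_pos_left (by omega) (by omega)) h2
      calc n * r + i < n * r + n := by omega
        _ = n * (r + 1) := by ring
        _ ≤ n * h := Nat.mul_le_mul_left _ hr
    have h4 : i = 0 := by
      have := congrArg (· % n) h3
      simpa [Nat.mod_eq_of_lt hi] using this
    subst h4
    refine ⟨rfl, Nat.eq_of_mul_eq_mul_left (by omega : 0 < n) (by simpa using h3)⟩
  · rintro ⟨rfl, rfl⟩
    rw [add_zero, hn1]; ring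

end PartN

section PartM
open Matrix

/-- generic `U` -/
def Ugen (F : Type*) [CommRing F] (n : ℕ) (σ : F) : Matrix (Fin n) (Fin n) F :=
  Matrix.of fun i j =>
    if (i : ℕ) = (j : ℕ) + 1 then 1
    else if (i : ℕ) = 0 ∧ (j : ℕ) = n - 1 then σ else 0

lemma Ugen_pow_apply {F : Type*} [CommRing F] {n : ℕ} (hn : 1 < n) (σ : F) (m : ℕ) (hm : m ≤ n)
    (i j : Fin n) : (Ugen F n σ ^ m) i j =
      if (i : ℕ) = j + m then 1 else if (i : ℕ) + n = j + m then σ else 0 := by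
  induction m generalizing i j with
  | zero =>
    rw [pow_zero, Matrix.one_apply]
    have := i.2
    have := j.2
    simp only [Fin.ext_iff, add_zero]
    rw [if_neg (show ¬ ((i : ℕ) + n = j) by omega)]
  | succ m ih =>
    rw [pow_succ, Matrix.mul_apply]
    have hi := i.2
    have hj := j.2
    by_cases h : (j : ℕ) + 1 < n
    · rw [Finset.sum_eq_single (⟨j + 1, h⟩ : Fin n)]
      · rw [ih (by omega)]
        simp only [Ugen, Matrix.of_apply, if_true, mul_one]
        congr 1
        · simp only [eq_iff_iff]; omega
        · congr 1; simp only [eq_iff_iff]; omega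
      · intro l _ hl
        have hl' : (l : ℕ) ≠ j + 1 := fun e => hl (Fin.ext e)
        have : Ugen F n σ l j = 0 := by
          simp only [Ugen, Matrix.of_apply]
          rw [if_neg hl', if_neg (by omega)]
        rw [this, mul_zero]
      · simp
    · rw [Finset.sum_eq_single (⟨0, by omega⟩ : Fin n)]
      · rw [ih (by omega)]
        have : Ugen F n σ ⟨0, by omega⟩ j = σ := by
          have hj := j.isLt
          simp only [Ugen, Matrix.of_apply]
          rw [if_neg (show ¬ (0 = (j : ℕ) + 1) by omega)]
          exact if_pos ⟨trivial, by omega⟩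
        rw [this]
        simp only
        by_cases h1 : (i : ℕ) = 0 + m
        · rw [if_pos h1, if_neg (show ¬ ((i : ℕ) = j + (m + 1)) by omega),
            if_pos (show (i : ℕ) + n = j + (m + 1) by omega), one_mul]
        · rw [if_neg h1, if_neg (show ¬ ((i : ℕ) + n = 0 + m) by omega),
            if_neg (show ¬ ((i : ℕ) = j + (m + 1)) by omega),
            if_neg (show ¬ ((i : ℕ) + n = j + (m + 1)) by omega), zero_mul]
      · intro l _ hl
        have hl' : (l : ℕ) ≠ 0 := fun e => hl (Fin.ext e)
        have : Ugen F n σ l j = 0 := by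
          simp only [Ugen, Matrix.of_apply]
          rw [if_neg (by have := l.2; omega), if_neg (by omega)]
        rw [this, mul_zero]
      · simp

lemma Ugen_pow {F : Type*} [CommRing F] {n : ℕ} (hn : 1 < n) (σ : ℕ) :
    Ugen F n (σ : F) ^ n = (σ : Matrix (Fin n) (Fin n) F) := by
  ext i j
  rw [Ugen_pow_apply hn _ _ le_rfl]
  have hi := i.2
  have hj := j.2
  rw [if_neg (by omega), ← Matrix.diagonal_natCast, Matrix.diagonal_apply]
  simp [Fin.ext_iff]

/-- generic `D` -/
def Dgen {F : Type*} [Field F] [Algebra ℚ F] (n : ℕ) (S : F ≃ₐ[ℚ] F) :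
    F →+* Matrix (Fin n) (Fin n) F :=
  (Matrix.diagonalRingHom (Fin n) F).comp
    (RingHom.pi fun i : Fin n => ((S ^ (i : ℕ) : F ≃ₐ[ℚ] F) : F →+* F))

lemma Dgen_apply {F : Type*} [Field F] [Algebra ℚ F] (n : ℕ) (S : F ≃ₐ[ℚ] F) (z : F) :
    Dgen n S z = Matrix.diagonal fun i : Fin n => (S ^ (i : ℕ)) z := rfl

lemma Dgen_mul_Ugen {F : Type*} [Field F] [Algebra ℚ F] {n : ℕ} (hn : 1 < n) (S : F ≃ₐ[ℚ] F)
    (hS : ∀ z, (S ^ n) z = z) (σ : F) (z : F) :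
    Dgen n S z * Ugen F n σ = Ugen F n σ * Dgen n S (S z) := by
  ext i j
  rw [Dgen_apply, Dgen_apply, Matrix.diagonal_mul, Matrix.mul_diagonal, mul_comm]
  simp only [Ugen, Matrix.of_apply]
  have h1 : ∀ m : ℕ, (S ^ m) (S z) = (S ^ (m + 1)) z := fun m => by rw [pow_succ]; rfl
  rw [h1]
  split_ifs with h2 h3
  · rw [h2]
  · rw [h3.1, h3.2, Nat.sub_add_cancel hn.le, hS, pow_zero]; rfl
  · simp

end PartM

section PartF

lemma S_pow_n {n p h g : ℕ} [Fact p.Prime] (hph : p = n * h + 1)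
    (hg : orderOf (g : ZMod p) = p - 1)
    (S : Zf n p h g ≃ₐ[ℚ] Zf n p h g)
    (hS : ∀ s : ℕ, (((S ^ s) (etaZ n p h g) : Zf n p h g) : ℂ) = gaussPeriod n p h g s)
    (z : Zf n p h g) : (S ^ n) z = z := by
  have h1 : (S ^ n) (etaZ n p h g) = etaZ n p h g := by
    apply Subtype.ext
    rw [hS]
    change gaussPeriod n p h g n = gaussPeriod n p h g 0
    rw [← per_pow, ← per_pow, pow_zero]
    have := per_shift hph hg 1 1
    rwa [mul_one, mul_one] at this
  have h2 : ((S ^ n : Zf n p h g ≃ₐ[ℚ] Zf n p h g) : Zf n p h g →ₐ[ℚ] Zf n p h g) =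
      AlgHom.id ℚ _ := by
    refine IntermediateField.algHom_ext_of_eq_adjoin ℚ (S := Zf n p h g)
      (s := {gaussPeriod n p h g 0}) rfl ?_
    intro x hx
    obtain rfl : x = gaussPeriod n p h g 0 := hx
    exact h1
  exact congrArg (fun f : Zf n p h g →ₐ[ℚ] Zf n p h g => f z) h2

/-- `O_Z` inside `Z` -/
def OZ (n p h g : ℕ) [Fact p.Prime] : Subring (Zf n p h g) :=
  (OC p ((g : ZMod p) ^ n)).comap (algebraMap (Zf n p h g) ℂ)

variable {n p h g : ℕ} [hpf : Fact p.Prime]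

lemma mem_OZ {z : Zf n p h g} : z ∈ OZ n p h g ↔ (z : ℂ) ∈ OC p ((g : ZMod p) ^ n) := Iff.rfl

lemma gp_mem (S : Zf n p h g ≃ₐ[ℚ] Zf n p h g)
    (hS : ∀ s : ℕ, (((S ^ s) (etaZ n p h g) : Zf n p h g) : ℂ) = gaussPeriod n p h g s) (s : ℕ) :
    gaussPeriod n p h g s ∈ Zf n p h g := by
  rw [← hS]; exact SetLike.coe_mem _

lemma OC_le (hn : 1 < n) (hph : p = n * h + 1) (hg : orderOf (g : ZMod p) = p - 1)
    (S : Zf n p h g ≃ₐ[ℚ] Zf n p h g)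
    (hS : ∀ s : ℕ, (((S ^ s) (etaZ n p h g) : Zf n p h g) : ℂ) = gaussPeriod n p h g s)
    {z : ℂ} (hz : z ∈ OC p ((g : ZMod p) ^ n)) : z ∈ Zf n p h g := by
  obtain ⟨c, rfl⟩ := OC_expand hn hph hg hz
  exact sum_mem fun s _ => zsmul_mem (gp_mem S hS s) _

lemma Speriod_mem (hph : p = n * h + 1) (hg : orderOf (g : ZMod p) = p - 1)
    (S : Zf n p h g ≃ₐ[ℚ] Zf n p h g)
    (hS : ∀ s : ℕ, (((S ^ s) (etaZ n p h g) : Zf n p h g) : ℂ) = gaussPeriod n p h g s) (s : ℕ) :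
    (S ^ s) (etaZ n p h g) ∈ OZ n p h g := by
  rw [mem_OZ, hS, ← per_pow]; exact per_mem hph hg _

lemma OZ_expand (hn : 1 < n) (hph : p = n * h + 1) (hg : orderOf (g : ZMod p) = p - 1)
    (S : Zf n p h g ≃ₐ[ℚ] Zf n p h g)
    (hS : ∀ s : ℕ, (((S ^ s) (etaZ n p h g) : Zf n p h g) : ℂ) = gaussPeriod n p h g s)
    {z : Zf n p h g} (hz : z ∈ OZ n p h g) :
    ∃ c : ℕ → ℤ, z = ∑ s ∈ Finset.range n, c s • (S ^ s) (etaZ n p h g) := by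
  obtain ⟨c, hc⟩ := OC_expand hn hph hg hz
  refine ⟨c, Subtype.ext ?_⟩
  have h0 : (z : ℂ) = ∑ s ∈ Finset.range n, c s • gaussPeriod n p h g s := hc
  have h1 : ((∑ s ∈ Finset.range n, c s • (S ^ s) (etaZ n p h g) : Zf n p h g) : ℂ) =
      algebraMap (Zf n p h g) ℂ (∑ s ∈ Finset.range n, c s • (S ^ s) (etaZ n p h g)) := rfl
  rw [h0, h1, map_sum]
  refine Finset.sum_congr rfl fun s _ => ?_
  rw [map_zsmul, ← hS]; rfl

lemma S_mem (hn : 1 < n) (hph : p = n * h + 1) (hg : orderOf (g : ZMod p) = p - 1)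
    (S : Zf n p h g ≃ₐ[ℚ] Zf n p h g)
    (hS : ∀ s : ℕ, (((S ^ s) (etaZ n p h g) : Zf n p h g) : ℂ) = gaussPeriod n p h g s)
    {z : Zf n p h g} (hz : z ∈ OZ n p h g) : S z ∈ OZ n p h g := by
  obtain ⟨c, rfl⟩ := OZ_expand hn hph hg S hS hz
  rw [map_sum]
  refine sum_mem fun s _ => ?_
  rw [map_zsmul]
  refine zsmul_mem ?_ _
  have := Speriod_mem hph hg S hS (s + 1)
  rw [pow_succ'] at this
  exact this

end PartF

/-- If `3 ∤ σ` and `3 ∤ N_{Z/ℚ}(η)`, then for every `k ≥ 2` every `k × k`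
matrix with entries in the maximal order `𝔪 = I(λ)` is a sum of cubes of `k × k`
matrices with entries in `𝔪`. -/
theorem matrices_over_maximal_order_sum_of_cubes
    (n p h g σ : ℕ) (lam : ℤ)
    (hn : n.Prime) (hnodd : Odd n)
    (hp : p.Prime)
    (hph : p = n * h + 1)
    (hg : orderOf (g : ZMod p) = p - 1)
    (hσfac : ∃ qs : Finset ℕ, 2 ≤ qs.card ∧
      (∀ q ∈ qs, q.Prime ∧ ¬ ∃ x : ZMod p, x ^ n = (q : ZMod p)) ∧ σ = ∏ q ∈ qs, q)
    (hσres : ∃ x : ZMod p, x ^ n = (σ : ZMod p))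
    (hσcop : Nat.Coprime σ p)
    (hlam : (lam : ZMod p) ^ n = (σ : ZMod p))
    (S : Zf n p h g ≃ₐ[ℚ] Zf n p h g)
    (hS : ∀ s : ℕ, (((S ^ s) (etaZ n p h g) : Zf n p h g) : ℂ) = gaussPeriod n p h g s)
    (β : Zf n p h g)
    (hβ : (β : ℂ) = ∏ r ∈ Finset.range h, (1 - zetaC p ^ (g ^ (n * r))))
    (hσ3 : ¬ (3 ∣ σ))
    (hnorm : ∃ N : ℤ, ¬ ((3 : ℤ) ∣ N) ∧ Algebra.norm ℚ (etaZ n p h g) = (N : ℚ))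
    (k : ℕ) (hk : 2 ≤ k)
    (C : Matrix (Fin k) (Fin k) (Matrix (Fin n) (Fin n) (Zf n p h g)))
    (hC : ∀ i j, C i j ∈ Iorder n p h g σ lam S β) :
    ∃ (m : ℕ) (A : Fin m → Matrix (Fin k) (Fin k) (Matrix (Fin n) (Fin n) (Zf n p h g))),
      (∀ t i j, A t i j ∈ Iorder n p h g σ lam S β) ∧ C = ∑ t, A t ^ 3 := by
  haveI hpf : Fact p.Prime := ⟨hp⟩
  have hn1 : 1 < n := hn.one_lt
  have hn2 : 2 < n := by
    rcases hnodd with ⟨t, ht⟩; omega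
  have hp3 : p % 3 ≠ 0 := by
    intro h0
    have h3 : p = 3 := ((Nat.prime_dvd_prime_iff_eq Nat.prime_three hp).1
      (Nat.dvd_of_mod_eq_zero h0)).symm
    rcases Nat.lt_or_ge h 1 with hh | hh
    · have : h = 0 := by omega
      rw [this] at hph; omega
    · have : n * 1 ≤ n * h := Nat.mul_le_mul_left _ hh
      omega
  -- the automorphism on `O`
  let S' : OZ n p h g →+* OZ n p h g :=
    (S : Zf n p h g →+* Zf n p h g).restrict (OZ n p h g) (OZ n p h g)
      (fun x hx => S_mem hn1 hph hg S hS hx)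
  have hS'c : ∀ z : OZ n p h g, ((S' z : OZ n p h g) : Zf n p h g) = S z := fun z => rfl
  let e0 : OZ n p h g := ⟨etaZ n p h g, by simpa using Speriod_mem hph hg S hS 0⟩
  have hSs : ∀ s : ℕ, (((S' ^ s) e0 : OZ n p h g) : Zf n p h g) = (S ^ s) (etaZ n p h g) := by
    intro s
    induction s with
    | zero => rfl
    | succ s ih =>
      rw [pow_succ', pow_succ']
      change S (((S' ^ s) e0 : OZ n p h g) : Zf n p h g) = _
      rw [ih]; rfl
  have hSsC : ∀ s : ℕ, ((((S' ^ s) e0 : OZ n p h g) : Zf n p h g) : ℂ) = gaussPeriod n p h g s :=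
    fun s => by rw [hSs, hS]
  let toC : OZ n p h g →+* ℂ := (algebraMap (Zf n p h g) ℂ).comp (OZ n p h g).subtype
  have toC_inj : Function.Injective toC := fun a b hab => Subtype.ext (Subtype.ext hab)
  have toC_S : ∀ s, toC ((S' ^ s) e0) = gaussPeriod n p h g s := hSsC
  have toC_e0 : toC e0 = gaussPeriod n p h g 0 := toC_S 0
  have lift : ∀ z ∈ OC p ((g : ZMod p) ^ n), ∃ w : OZ n p h g, toC w = z := fun z hz =>
    ⟨⟨⟨z, OC_le hn1 hph hg S hS hz⟩, hz⟩, rfl⟩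
  have hexp : ∀ z : OZ n p h g, ∃ c : ℕ → ℤ,
      z = ∑ s ∈ Finset.range n, c s • (S' ^ s) e0 := by
    intro z
    obtain ⟨c, hc⟩ := OC_expand hn1 hph hg (z := toC z) z.2
    refine ⟨c, toC_inj ?_⟩
    rw [map_sum, hc]
    refine Finset.sum_congr rfl fun s _ => ?_
    rw [map_zsmul, toC_S]
  have hspan : ∀ z : OZ n p h g,
      z ∈ AddSubgroup.closure (Set.range fun s : ℕ => (S' ^ s) e0) := by
    intro z
    obtain ⟨c, hc⟩ := hexp z
    rw [hc]
    refine sum_mem fun s _ => AddSubgroup.zsmul_mem _ (AddSubgroup.subset_closure ?_) _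
    exact ⟨s, rfl⟩
  have hsum : ∑ s ∈ Finset.range n, (S' ^ s) e0 = -1 := by
    apply toC_inj
    rw [map_sum, map_neg, map_one, ← sum_periods hn1 hph hg]
    exact Finset.sum_congr rfl fun s _ => toC_S s
  choose perO hperO using fun x : ZMod p => lift _ (per_mem hph hg x)
  have F1 : ∀ i, 0 < i → i < n → ∀ K : AddSubgroup (OZ n p h g), (∀ z, z - S' z ∈ K) →
      e0 * e0 - (S' ^ i) e0 * e0 + p • e0 ∈ K := by
    intro i hi hin K hK
    have hKs : ∀ s : ℕ, (S' ^ s) e0 - e0 ∈ K := by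
      intro s
      induction s with
      | zero => simp
      | succ s ih =>
        have := K.sub_mem ih (hK ((S' ^ s) e0))
        rw [pow_succ']
        simpa using this
    have hper : ∀ x, x ≠ 0 → perO x - e0 ∈ K := by
      intro x hx
      obtain ⟨s, _, hs⟩ := per_ne hn1 hph hg hx
      have : perO x = (S' ^ s) e0 := toC_inj (by rw [hperO, hs, toC_S])
      rw [this]; exact hKs s
    have hone : 1 + n • e0 ∈ K := by
      have h1 : ∑ s ∈ Finset.range n, ((S' ^ s) e0 - e0) ∈ K := sum_mem fun s _ => hKs s
      rw [Finset.sum_sub_distrib, hsum, Finset.sum_const, Finset.card_range] at h1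
      have := K.neg_mem h1
      convert this using 1
      abel
    have hper0 : perO 0 - e0 + p • e0 ∈ K := by
      have h1 : perO 0 = (h : OZ n p h g) := toC_inj (by rw [hperO, per_zero, map_natCast])
      have h2 := K.nsmul_mem hone h
      convert h2 using 1
      have h3 : (p : OZ n p h g) = n * h + 1 := by exact_mod_cast congrArg (Nat.cast (R := OZ n p h g)) hph
      simp only [h1, nsmul_eq_mul, h3]
      ring
    obtain ⟨r0, hr0, hcount⟩ := count_neg_one hn1 hnodd hph hg
    have hmul : ∀ b, (S' ^ b) e0 * e0 =
        ∑ r ∈ Finset.range h, perO (1 + (g : ZMod p) ^ (n * r + b)) := by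
      intro b
      apply toC_inj
      rw [map_mul, toC_S, toC_e0, per_mul hph hg, map_sum]
      exact Finset.sum_congr rfl fun r _ => (hperO _).symm
    have hA : (S' ^ i) e0 * e0 - h • e0 ∈ K := by
      have h1 : ∑ r ∈ Finset.range h, (perO (1 + (g : ZMod p) ^ (n * r + i)) - e0) ∈ K := by
        refine sum_mem fun r hr => hper _ fun h0 => ?_
        have := ((hcount i hin r (Finset.mem_range.1 hr)).1 h0).1
        omega
      rwa [Finset.sum_sub_distrib, ← hmul, Finset.sum_const, Finset.card_range] at h1
    have hB : e0 * e0 - h • e0 + p • e0 ∈ K := by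
      have h1 : ∑ r ∈ Finset.range h, (perO (1 + (g : ZMod p) ^ (n * r + 0)) - e0 +
          if r = r0 then p • e0 else 0) ∈ K := by
        refine sum_mem fun r hr => ?_
        have hc := hcount 0 (by omega) r (Finset.mem_range.1 hr)
        split_ifs with h2
        · rw [hc.2 ⟨rfl, h2⟩]; exact hper0
        · rw [add_zero]
          exact hper _ fun h0 => h2 (hc.1 h0).2
      rw [Finset.sum_add_distrib, Finset.sum_sub_distrib, ← hmul, Finset.sum_const,
        Finset.card_range, Finset.sum_ite_eq', if_pos (Finset.mem_range.2 hr0)] at h1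
      exact h1
    have := K.sub_mem hB hA
    convert this using 1
    abel
  -- beta
  have hβ' : ∀ s : ℕ, ∏ r ∈ Finset.range h, (1 - zetaC p ^ (g ^ (n * r + s))) =
      ∏ r ∈ Finset.range h, (1 - chi p ((g : ZMod p) ^ (n * r + s))) := fun s => by
    refine Finset.prod_congr rfl fun r _ => ?_
    rw [← chi_nat]; push_cast; rfl
  have hβC : (β : ℂ) = ∏ r ∈ Finset.range h, (1 - chi p ((g : ZMod p) ^ (n * r + 0))) := by
    rw [hβ, ← hβ' 0]; rfl
  have hβO : β ∈ OZ n p h g := by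
    rw [mem_OZ, hβC]; exact bet_mem hph hg 0
  let bO : OZ n p h g := ⟨β, hβO⟩
  have toC_b : toC bO = ∏ r ∈ Finset.range h, (1 - chi p ((g : ZMod p) ^ (n * r + 0))) := hβC
  obtain ⟨b', hb'⟩ := lift (∏ s ∈ Finset.range (n - 1), ∏ r ∈ Finset.range h,
    (1 - chi p ((g : ZMod p) ^ (n * r + (s + 1))))) (prod_mem fun s _ => bet_mem hph hg _)
  have hbb : bO * b' = (p : OZ n p h g) := by
    apply toC_inj
    rw [map_mul, toC_b, hb', map_natCast, ← prod_one_sub_chi, prod_erase hn1 hph hg]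
    obtain ⟨n', hn'⟩ : ∃ n', n = n' + 1 := ⟨n - 1, by omega⟩
    have : Finset.range n = Finset.range ((n - 1) + 1) := by
      rw [Nat.sub_add_cancel hn1.le]
    rw [this, Finset.prod_range_succ', mul_comm]
  let D : OZ n p h g →+* Matrix (Fin n) (Fin n) (Zf n p h g) :=
    (Dgen n S).comp (OZ n p h g).subtype
  have hDm : ∀ z : OZ n p h g, D z = Dm n p h g S z := fun z => rfl
  have hUm : Um n p h g σ = Ugen (Zf n p h g) n (σ : Zf n p h g) := rfl
  have hUpow : Um n p h g σ ^ n = (σ : Matrix (Fin n) (Fin n) (Zf n p h g)) := by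
    rw [hUm]; exact Ugen_pow hn1 σ
  have hDU : ∀ z, D z * Um n p h g σ = Um n p h g σ * D (S' z) := fun z => by
    rw [hUm]; exact Dgen_mul_Ugen hn1 S (S_pow_n hph hg S hS) _ (z : Zf n p h g)
  have hpZ : (p : Zf n p h g) ≠ 0 := Nat.cast_ne_zero.2 hp.ne_zero
  have hY : p • Ym n p h g σ lam S β =
      ((lam : Matrix (Fin n) (Fin n) (Zf n p h g)) - Um n p h g σ) * D (bO ^ (n - 1)) := by
    have h1 : Dm n p h g S (β ^ (n - 1)) = D (bO ^ (n - 1)) := rfl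
    have h2 : (lam : Zf n p h g) • (1 : Matrix (Fin n) (Fin n) (Zf n p h g)) =
        (lam : Matrix (Fin n) (Fin n) (Zf n p h g)) := by
      rw [Int.cast_smul_eq_zsmul, zsmul_eq_mul, mul_one]
    rw [Ym, h1, h2, ← Nat.cast_smul_eq_nsmul (Zf n p h g), smul_smul, mul_inv_cancel₀ hpZ,
      one_smul]
  have hlat : ∀ x, x ∈ Iorder n p h g σ lam S β ↔ x ∈ lat D (Ym n p h g σ lam S β) n := by
    intro x
    constructor
    · rintro ⟨c, rfl⟩
      refine sum_mem fun i _ => sum_mem fun s _ => AddSubgroup.zsmul_mem _ ?_ _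
      have := lat_mem (D := D) (U := Ym n p h g σ lam S β) i.2 ((S' ^ (s : ℕ)) e0)
      rwa [hDm, hSs] at this
    · intro hx
      induction hx using AddSubgroup.closure_induction with
      | mem x hx =>
        obtain ⟨i, hi, z, rfl⟩ := hx
        obtain ⟨c, hc⟩ := hexp z
        refine ⟨fun i' s => if i' = ⟨i, hi⟩ then c s else 0, ?_⟩
        rw [Finset.sum_eq_single (⟨i, hi⟩ : Fin n)]
        · simp only [if_true]
          rw [hc, map_sum, Finset.mul_sum, Finset.sum_range]
          refine Finset.sum_congr rfl fun s _ => ?_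
          rw [map_zsmul, mul_smul_comm, hDm, hSs]
        · intro b _ hb
          refine Finset.sum_eq_zero fun s _ => ?_
          simp only [if_neg hb, zero_smul]
        · simp
      | zero => exact ⟨fun _ _ => 0, by simp⟩
      | add x y _ _ hx hy =>
        obtain ⟨a, rfl⟩ := hx
        obtain ⟨b, rfl⟩ := hy
        refine ⟨fun i s => a i s + b i s, ?_⟩
        simp only [add_smul, Finset.sum_add_distrib]
      | neg x _ hx =>
        obtain ⟨a, rfl⟩ := hx
        refine ⟨fun i s => - a i s, ?_⟩
        simp only [neg_smul, Finset.sum_neg_distrib]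
  have hfin := abstract_main (D := D) (S := S') (U := Um n p h g σ) (Y := Ym n p h g σ lam S β)
    (lam := lam) hn1 hp3 (fun h0 => hσ3 (Nat.dvd_of_mod_eq_zero h0)) hUpow hDU
    (bO ^ (n - 1)) (b' ^ (n - 1)) (n - 1) (by rw [← mul_pow, hbb]) hY e0 hspan F1
    (factF2 S' n e0 hspan hsum) k hk C (fun i j => (hlat _).1 (hC i j))
  obtain ⟨m, A, hA, hCA⟩ := cubeG_exists hfin
  exact ⟨m, A, fun t i j => (hlat _).2 (hA t i j), hCA⟩

end
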